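/- arXiv:2105.09117 — 4 statements merged into one kernel-verified Lean document; each statement's English description precedes it below -/
import Mathlib

section
/- Let G be a finite group of odd order such that the exponent of the centre Z(G) is strictly less than the exponent of G. Then no element of Z(G) is a witness; that is, Z(G) ∩ W(G) = ∅. -/
/-- An element `k` of finite order `n` in a group `G` is a *witness* if the ordered
product `(x * k^(n-1)) * (x * k^(n-2)) * ⋯ * x` equals `1` for all `x ∈ G`. -/
def IsWitness {G : Type*} [Group G] (k : G) : Prop :=
  IsOfFinOrder k ∧ ∀ x : G,
    ((List.range (orderOf k)).map (fun i => x * k ^ (orderOf k - 1 - i))).prod = 1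

theorem list_prod_map_mul_left_of_commute {M ι : Type*} [Monoid M] {a : M} {f : ι → M}
    {l : List ι} (hf : ∀ i ∈ l, Commute a (f i)) :
    (l.map fun i => a * f i).prod = a ^ l.length * (l.map f).prod := by
  induction l with
  | nil => simp
  | cons i l ih =>
    obtain ⟨hi, hl⟩ := List.forall_mem_cons.mp hf
    calc ((i :: l).map fun i => a * f i).prod
        = a * f i * (a ^ l.length * (l.map f).prod) := by
          rw [List.map_cons, List.prod_cons, ih hl]
      _ = a * a ^ l.length * (f i * (l.map f).prod) :=
          (hi.symm.pow_right l.length).mul_mul_mul_comm a (l.map f).prod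
      _ = a ^ (i :: l).length * ((i :: l).map f).prod := by
          rw [← pow_succ', List.length_cons, List.map_cons, List.prod_cons]

namespace IsWitness

variable {G : Type*} [Group G] {k : G}

theorem pow_orderOf_eq_one (hw : IsWitness k) (hk : k ∈ Subgroup.center G) (x : G) :
    x ^ orderOf k = 1 := by
  let P := ((List.range (orderOf k)).map fun i => k ^ (orderOf k - 1 - i)).prod
  have hprod (y : G) : y ^ orderOf k * P = 1 := by
    have hcomm : Commute y k := Subgroup.mem_center_iff.mp hk y
    simpa only [list_prod_map_mul_left_of_commute fun _ _ => hcomm.pow_right _,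
      List.length_range] using hw.2 y
  have hP : P = 1 := by simpa only [one_pow, one_mul] using hprod 1
  simpa only [hP, mul_one] using hprod x

theorem orderOf_eq_exponent (hw : IsWitness k) (hk : k ∈ Subgroup.center G) :
    orderOf k = Monoid.exponent G :=
  Nat.dvd_antisymm (Monoid.order_dvd_exponent k)
    (Monoid.exponent_dvd_of_forall_pow_eq_one (hw.pow_orderOf_eq_one hk))

end IsWitness

/- The hypothesis reads `≠` rather than `<` because an unbounded exponent is recorded as `0`. -/
theorem center_no_witness_of_exp_lt_general {G : Type*} [Group G]
    (hexp : Monoid.exponent (Subgroup.center G) ≠ Monoid.exponent G) :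
    ∀ k ∈ Subgroup.center G, ¬ IsWitness k := by
  intro k hk hw
  have hcenter : Monoid.exponent (Subgroup.center G) ∣ Monoid.exponent G :=
    Monoid.exponent_submonoid_dvd (Subgroup.center G).toSubmonoid
  have horder : orderOf k ∣ Monoid.exponent (Subgroup.center G) := by
    simpa only [Subgroup.orderOf_mk] using Monoid.order_dvd_exponent (⟨k, hk⟩ : Subgroup.center G)
  exact hexp (Nat.dvd_antisymm hcenter (hw.orderOf_eq_exponent hk ▸ horder))

/-- If `G` is a finite group of odd order with `exp(Z(G)) < exp(G)`, then no central
element is a witness: `Z(G) ∩ W(G) = ∅`. -/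
theorem center_no_witness_of_exp_lt {G : Type*} [Group G] [Fintype G]
    (hodd : Odd (Fintype.card G))
    (hexp : Monoid.exponent (Subgroup.center G) < Monoid.exponent G) :
    ∀ k ∈ Subgroup.center G, ¬ IsWitness k :=
  center_no_witness_of_exp_lt_general hexp.ne
end

section
/- Let p be an odd prime and let G be a finite p-group of exponent p. Then G is a J-group, and Z(G) ∩ W(G) = B(Z(G)); that is, the central witnesses are exactly the nontrivial elements of the centre. -/
/-!
For a central element `k` of order `n`, the product defining a witness collects to
`x ^ n * k ^ (0 + 1 + ⋯ + (n - 1))`. If `n` is odd then it divides `0 + 1 + ⋯ + (n - 1)`, so the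
second factor vanishes, and `k` is a witness exactly when `x ^ n = 1` for all `x`, that is, when
`n` is the exponent of `G`. In a finite group of prime exponent the centre is nontrivial, so it
has the same exponent as the group.
-/

section

open Monoid Subgroup

theorem prod_map_mul_pow_of_commute {M ι : Type*} [Monoid M] {x k : M} (h : Commute x k)
    (f : ι → ℕ) (l : List ι) :
    (l.map fun i => x * k ^ f i).prod = x ^ l.length * k ^ (l.map f).sum := by
  induction l with
  | nil => simp
  | cons a l ih =>
    have hcomm : Commute (k ^ f a) (x ^ l.length) := (h.pow_pow _ _).symm
    simp only [List.map_cons, List.prod_cons, List.sum_cons, List.length_cons, ih, pow_succ',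
      pow_add, hcomm.mul_mul_mul_comm]

theorem dvd_sum_range_reflect_of_odd {n : ℕ} (hn : Odd n) :
    n ∣ ((List.range n).map fun i => n - 1 - i).sum := by
  have hsum : ((List.range n).map fun i => n - 1 - i).sum = ∑ i ∈ Finset.range n, i :=
    Finset.sum_range_reflect (fun i => i) n
  rw [hsum]
  refine (Nat.coprime_two_right.mpr hn).dvd_of_dvd_mul_right ?_
  rw [Finset.sum_range_id_mul_two]
  exact dvd_mul_right n (n - 1)

theorem exponent_eq_of_injective_of_prime {M N : Type*} [Monoid M] [Monoid N] [Nontrivial M]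
    (f : M →* N) (hf : Function.Injective f) (hN : (exponent N).Prime) :
    exponent M = exponent N :=
  (hN.eq_one_or_self_of_dvd _ (exponent_dvd_of_monoidHom f hf)).resolve_left
    (mt exp_eq_one_iff.mp (not_subsingleton M))

variable {G : Type*} [Group G]

theorem exponent_center_eq_exponent_of_prime [Finite G] (hG : (exponent G).Prime) :
    exponent (center G) = exponent G := by
  have : Fact (exponent G).Prime := ⟨hG⟩
  have : Nontrivial G := not_subsingleton_iff_nontrivial.mp (mt exp_eq_one_iff.mpr hG.ne_one)
  have hpGroup : IsPGroup (exponent G) G := fun g => ⟨1, by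
    rw [pow_one, Monoid.pow_exponent_eq_one]⟩
  have : Nontrivial (center G) := hpGroup.center_nontrivial
  exact exponent_eq_of_injective_of_prime (center G).subtype (center G).subtype_injective hG

theorem isWitness_iff_orderOf_eq_exponent {k : G} (hk : k ∈ center G) (hodd : Odd (orderOf k)) :
    IsWitness k ↔ orderOf k = exponent G := by
  have hprod (x : G) :
      ((List.range (orderOf k)).map fun i => x * k ^ (orderOf k - 1 - i)).prod =
        x ^ orderOf k := by
    have hcomm : Commute x k := mem_center_iff.mp hk x
    rw [prod_map_mul_pow_of_commute hcomm, List.length_range,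
      orderOf_dvd_iff_pow_eq_one.mp (dvd_sum_range_reflect_of_odd hodd), mul_one]
  calc IsWitness k
      ↔ ∀ x : G, x ^ orderOf k = 1 := by
        simp only [IsWitness, hprod, orderOf_pos_iff.mp hodd.pos, true_and]
    _ ↔ exponent G ∣ orderOf k := exponent_dvd_iff_forall_pow_eq_one.symm
    _ ↔ orderOf k = exponent G :=
        ⟨(order_dvd_exponent k).antisymm, fun h => h.symm.dvd⟩

open scoped IsMulCommutative in
theorem pGroup_exponent_p_isJGroup_general (hodd : Odd (exponent G))
    (hcenter : exponent (center G) = exponent G) :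
    (∃ k : G, IsWitness k) ∧
    (∀ k ∈ center G, (IsWitness k ↔ orderOf k = exponent (center G))) := by
  have hiff : ∀ k ∈ center G, (IsWitness k ↔ orderOf k = exponent (center G)) := fun k hk => by
    rw [hcenter]
    exact isWitness_iff_orderOf_eq_exponent hk (hodd.of_dvd_nat (order_dvd_exponent k))
  have hexists : ExponentExists (center G) := exponent_pos.mp (hcenter ▸ hodd.pos)
  obtain ⟨z, hz⟩ := exists_orderOf_eq_exponent hexists
  exact ⟨⟨z, (hiff z z.2).mpr ((orderOf_coe z).trans hz)⟩, hiff⟩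

end

/-- A finite `p`-group of exponent `p`, with `p` an odd prime, is a `J`-group, and
`Z(G) ∩ W(G) = B(Z(G))`: the central witnesses are exactly the central elements of
order equal to the exponent of the centre (i.e. the nontrivial central elements). -/
theorem pGroup_exponent_p_isJGroup {G : Type*} [Group G] [Fintype G] (p : ℕ)
    (hp : p.Prime) (hodd : Odd p) (hG : IsPGroup p G)
    (hexp : Monoid.exponent G = p) :
    (∃ k : G, IsWitness k) ∧
    (∀ k ∈ Subgroup.center G,
      (IsWitness k ↔ orderOf k = Monoid.exponent (Subgroup.center G))) :=
  pGroup_exponent_p_isJGroup_general (hexp ▸ hodd)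
    (exponent_center_eq_exponent_of_prime (hexp ▸ hp))
end

section
/- Let p be an odd prime and let G be a finite p-group of nilpotency class c. If p > 2c − 1, then every element of G whose order equals the exponent of G is a witness (that is, B(G) ⊆ W(G)), and G is a J-group. -/
/-!
For fixed `x` and `k` put `P n = (x * k ^ (n - 1)) * ⋯ * (x * k) * x`. Its first difference
`P (n + 1) * (P n)⁻¹` is `x * k ^ n` and its second difference is the constant `x * k * x⁻¹`, so
`P` is a polynomial sequence for every filtration `Γ` with `Γ 2 = ⊤`. For a group of class `c` the
lower central series run at half speed, `Γ a = γ_⌈a/2⌉`, is such a filtration and vanishes at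
`2 * c + 1`. Since products of polynomial sequences are polynomial (Lazard, Leibman), `P` has a
Taylor expansion into factors `h ^ n.choose j` with `0 < j ≤ 2 * c`. At `n = exponent G` all of
these are trivial as soon as the prime factors of `n` exceed `2 * c`, because `n` divides
`n.choose j` when `j` is coprime to `n`. An element of order `exponent G` exists since elements of
coprime orders commute in a nilpotent group.
-/

open scoped commutatorElement

section Filtration

variable {G : Type*} [Group G]

lemma commutator_commutator_le_of_rotate {H₁ H₂ H₃ N : Subgroup G} [N.Normal]
    (h₁ : ⁅⁅H₂, H₃⁆, H₁⁆ ≤ N) (h₂ : ⁅⁅H₃, H₁⁆, H₂⁆ ≤ N) : ⁅⁅H₁, H₂⁆, H₃⁆ ≤ N := by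
  have le_iff (H : Subgroup G) : H ≤ N ↔ H.map (QuotientGroup.mk' N) = ⊥ := by
    rw [Subgroup.map_eq_bot_iff, QuotientGroup.ker_mk']
  rw [le_iff, Subgroup.map_commutator, Subgroup.map_commutator] at h₁ h₂ ⊢
  exact Subgroup.commutator_commutator_eq_bot_of_rotate h₁ h₂

lemma commutator_lowerCentralSeries_le (S : Subgroup G) [S.Normal] (a b : ℕ) :
    ⁅S.lowerCentralSeries a, S.lowerCentralSeries b⁆ ≤ S.lowerCentralSeries (a + b + 1) := by
  induction b generalizing a with
  | zero => exact le_rfl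
  | succ b ih =>
    rw [Subgroup.commutator_comm, Subgroup.lowerCentralSeries_succ _ b]
    apply commutator_commutator_le_of_rotate
    · rw [Subgroup.commutator_comm S, ← Subgroup.lowerCentralSeries_succ]
      exact (ih (a + 1)).trans (Subgroup.lowerCentralSeries_antitone _ (by lia))
    · exact Subgroup.commutator_mono (ih a) le_rfl

/-- A filtration of a group by subgroups indexed by degree, compatible with commutators. Neither
`Γ 0 = ⊤` nor `Γ 0 = Γ 1` is required. -/
structure IsCommutatorFiltration (Γ : ℕ → Subgroup G) : Prop where
  antitone : Antitone Γ
  commutator_le (a b : ℕ) : ⁅Γ a, Γ b⁆ ≤ Γ (a + b)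

namespace IsCommutatorFiltration

lemma commutator_mem {Γ : ℕ → Subgroup G} (hΓ : IsCommutatorFiltration Γ) {a b : ℕ} {x y : G}
    (hx : x ∈ Γ a) (hy : y ∈ Γ b) : ⁅x, y⁆ ∈ Γ (a + b) :=
  hΓ.commutator_le a b (Subgroup.commutator_mem_commutator hx hy)

lemma lowerCentralSeries_pred (S : Subgroup G) [S.Normal] :
    IsCommutatorFiltration fun a => S.lowerCentralSeries (a - 1) where
  antitone _ _ hab := S.lowerCentralSeries_antitone (Nat.sub_le_sub_right hab 1)
  commutator_le a b := by
    rcases a.eq_zero_or_pos with rfl | ha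
    · simpa using Subgroup.commutator_le_right S (S.lowerCentralSeries (b - 1))
    · exact (commutator_lowerCentralSeries_le S _ _).trans
        (S.lowerCentralSeries_antitone (by lia))

lemma comp_half {Γ : ℕ → Subgroup G} (hΓ : IsCommutatorFiltration Γ) :
    IsCommutatorFiltration fun a => Γ ((a + 1) / 2) where
  antitone _ _ hab := hΓ.antitone (by lia)
  commutator_le _ _ := (hΓ.commutator_le _ _).trans (hΓ.antitone (by lia))

end IsCommutatorFiltration

end Filtration

section SeqDiff

variable {G : Type*} [Group G]

/-- The forward difference of a sequence in a (multiplicative, possibly noncommutative) group, with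
the inverse on the right. -/
def seqDiff (f : ℕ → G) (m : ℕ) : G := f (m + 1) * (f m)⁻¹

lemma seqDiff_const (h : G) : seqDiff (fun _ => h) = fun _ => 1 :=
  funext fun _ => mul_inv_cancel h

lemma seqDiff_pow_choose_succ (h : G) (j : ℕ) :
    seqDiff (fun m => h ^ m.choose (j + 1)) = fun m => h ^ m.choose j := by
  funext m
  simp [seqDiff, Nat.choose_succ_succ, pow_add]

lemma seqDiff_mul (f g : ℕ → G) :
    seqDiff (f * g) =
      (fun m => f (m + 1)) * seqDiff g * (fun m => f (m + 1))⁻¹ * seqDiff f := by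
  funext m
  simp only [seqDiff, Pi.mul_apply, Pi.inv_apply]
  group

lemma seqDiff_commutator (f g : ℕ → G) :
    seqDiff ⁅f, g⁆ =
      seqDiff f * ⁅f, seqDiff g⁆ * (seqDiff f)⁻¹ * ⁅seqDiff f * seqDiff g, ⁅f, g⁆⁆ *
        (⁅f, g⁆ * ⁅seqDiff f, seqDiff g * g⁆ * ⁅f, g⁆⁻¹) := by
  funext m
  simp only [seqDiff, commutatorElement_def, Pi.mul_apply, Pi.inv_apply]
  group

lemma seqDiff_iterate_shift (f : ℕ → G) (i m : ℕ) :
    seqDiff^[i] (fun m => f (m + 1)) m = seqDiff^[i] f (m + 1) := by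
  induction i generalizing f with
  | zero => rfl
  | succ _ ih => exact ih (seqDiff f)

lemma seqDiff_iterate_apply_zero {f : ℕ → G} {j : ℕ} (hf : ∀ i < j, f i = 1) :
    seqDiff^[j] f 0 = f j := by
  induction j generalizing f with
  | zero => rfl
  | succ j ih =>
    have hdiff : ∀ i < j, seqDiff f i = 1 := fun i hi => by
      simp [seqDiff, hf i (by lia), hf (i + 1) (by lia)]
    rw [Function.iterate_succ_apply, ih hdiff, seqDiff, hf j j.lt_succ_self, inv_one, mul_one]

end SeqDiff

/-- `f` is a polynomial sequence with respect to `Γ` shifted by `k`, as far as differences of order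
at most `n` can tell: the `i`-th difference takes values in `Γ (k + i)` for `i ≤ n`. The truncation
at `n` is what the proof that products are polynomial inducts on. -/
def IsPolyUpTo {G : Type*} [Group G] (Γ : ℕ → Subgroup G) (n k : ℕ) (f : ℕ → G) : Prop :=
  ∀ i ≤ n, ∀ m, seqDiff^[i] f m ∈ Γ (k + i)

namespace IsPolyUpTo

variable {G : Type*} [Group G] {Γ : ℕ → Subgroup G} {n k l : ℕ} {f g : ℕ → G}

lemma zero_iff : IsPolyUpTo Γ 0 k f ↔ ∀ m, f m ∈ Γ k := by
  simp [IsPolyUpTo]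

lemma succ_iff :
    IsPolyUpTo Γ (n + 1) k f ↔ (∀ m, f m ∈ Γ k) ∧ IsPolyUpTo Γ n (k + 1) (seqDiff f) := by
  refine ⟨fun hf => ⟨hf 0 n.succ.zero_le, fun i hi m => ?_⟩, ?_⟩
  · simpa [Nat.add_right_comm, Nat.add_assoc] using hf (i + 1) (Nat.succ_le_succ hi) m
  · rintro ⟨hf, hdiff⟩ (_ | i) hi m
    · exact hf m
    · simpa [Nat.add_right_comm, Nat.add_assoc] using hdiff i (Nat.le_of_succ_le_succ hi) m

lemma of_succ (hf : IsPolyUpTo Γ (n + 1) k f) : IsPolyUpTo Γ n k f :=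
  fun i hi => hf i (hi.trans n.le_succ)

lemma mono (hΓ : Antitone Γ) (hlk : l ≤ k) (hf : IsPolyUpTo Γ n k f) : IsPolyUpTo Γ n l f :=
  fun i hi m => hΓ (Nat.add_le_add_right hlk i) (hf i hi m)

lemma shift (hf : IsPolyUpTo Γ n k f) : IsPolyUpTo Γ n k (fun m => f (m + 1)) :=
  fun i hi m => seqDiff_iterate_shift f i m ▸ hf i hi (m + 1)

lemma one : IsPolyUpTo Γ n k fun _ => 1 := by
  induction n generalizing k with
  | zero => exact zero_iff.2 fun _ => one_mem _
  | succ n ih => exact succ_iff.2 ⟨fun _ => one_mem _, (seqDiff_const (1 : G)).symm ▸ ih⟩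

lemma pow_choose (hΓ : Antitone Γ) {h : G} {j : ℕ} (hh : h ∈ Γ (k + j)) :
    IsPolyUpTo Γ n k fun m => h ^ m.choose j := by
  have hmem (m : ℕ) : h ^ m.choose j ∈ Γ k := pow_mem (hΓ (Nat.le_add_right k j) hh) _
  induction n generalizing k j with
  | zero => exact zero_iff.2 hmem
  | succ n ih =>
    refine succ_iff.2 ⟨hmem, ?_⟩
    cases j with
    | zero => simpa only [Nat.choose_zero_right, seqDiff_const] using one
    | succ j =>
      rw [seqDiff_pow_choose_succ]
      have hh_succ : h ∈ Γ (k + 1 + j) := by rwa [Nat.add_right_comm]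
      exact ih hh_succ fun m => pow_mem (hΓ (Nat.le_add_right _ j) hh_succ) _

-- The two closure properties need each other: the difference of a product involves a conjugate,
-- hence a commutator, and the difference of a commutator is a product.
lemma mul_and_commutator (hΓ : IsCommutatorFiltration Γ) (n : ℕ) :
    (∀ k f g, IsPolyUpTo Γ n k f → IsPolyUpTo Γ n k g → IsPolyUpTo Γ n k (f * g)) ∧
      ∀ a b f g, IsPolyUpTo Γ n a f → IsPolyUpTo Γ n b g → IsPolyUpTo Γ n (a + b) ⁅f, g⁆ := by
  induction n with
  | zero =>
    simp only [zero_iff]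
    exact ⟨fun k f g hf hg m => mul_mem (hf m) (hg m),
      fun a b f g hf hg m => hΓ.commutator_mem (hf m) (hg m)⟩
  | succ n ih =>
    obtain ⟨hmul, hcomm⟩ := ih
    have hconj {a b f g} (hf : IsPolyUpTo Γ n a f) (hg : IsPolyUpTo Γ n b g) :
        IsPolyUpTo Γ n b (f * g * f⁻¹) := by
      have h := hmul _ _ _ ((hcomm _ _ _ _ hf hg).mono hΓ.antitone (Nat.le_add_left b a)) hg
      rwa [commutatorElement_def, inv_mul_cancel_right] at h
    refine ⟨fun k f g hf hg => ?_, fun a b f g hf hg => ?_⟩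
    · obtain ⟨hf₀, hdf⟩ := succ_iff.1 hf
      obtain ⟨hg₀, hdg⟩ := succ_iff.1 hg
      refine succ_iff.2 ⟨fun m => mul_mem (hf₀ m) (hg₀ m), ?_⟩
      rw [seqDiff_mul]
      exact hmul _ _ _ (hconj hf.of_succ.shift hdg) hdf
    · obtain ⟨hf₀, hdf⟩ := succ_iff.1 hf
      obtain ⟨hg₀, hdg⟩ := succ_iff.1 hg
      refine succ_iff.2 ⟨fun m => hΓ.commutator_mem (hf₀ m) (hg₀ m), ?_⟩
      have hfg := hcomm _ _ _ _ hf.of_succ hg.of_succ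
      have hdfdg : IsPolyUpTo Γ n 1 (seqDiff f * seqDiff g) :=
        hmul _ _ _ (hdf.mono hΓ.antitone (by lia)) (hdg.mono hΓ.antitone (by lia))
      have hg' : IsPolyUpTo Γ n b (seqDiff g * g) :=
        hmul _ _ _ (hdg.mono hΓ.antitone b.le_succ) hg.of_succ
      rw [seqDiff_commutator]
      refine hmul _ _ _ (hmul _ _ _ ?_ ?_) ?_
      · exact hconj hdf (hcomm a (b + 1) _ _ hf.of_succ hdg)
      · exact (hcomm _ _ _ _ hdfdg hfg).mono hΓ.antitone (by lia)
      · exact hconj hfg ((hcomm _ _ _ _ hdf hg').mono hΓ.antitone (by lia))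

lemma mul (hΓ : IsCommutatorFiltration Γ) (hf : IsPolyUpTo Γ n k f) (hg : IsPolyUpTo Γ n k g) :
    IsPolyUpTo Γ n k (f * g) :=
  (mul_and_commutator hΓ n).1 k f g hf hg

lemma apply_mem_of_forall_lt {j : ℕ} (hf : IsPolyUpTo Γ j k f) (hf1 : ∀ i < j, f i = 1) :
    f j ∈ Γ (k + j) :=
  seqDiff_iterate_apply_zero hf1 ▸ hf j le_rfl 0

lemma apply_eq_one_of_forall_lt (hΓ : Antitone Γ) {N : ℕ} (hN : Γ N = ⊥)
    (hf : ∀ n, IsPolyUpTo Γ n k f) (hf1 : ∀ i < N, f i = 1) (m : ℕ) : f m = 1 := by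
  induction m using Nat.strong_induction_on with
  | _ m ih =>
    rcases lt_or_ge m N with hm | hm
    · exact hf1 m hm
    · have hfm : f m ∈ Γ N := hΓ (by lia) ((hf m).apply_mem_of_forall_lt ih)
      rwa [hN, Subgroup.mem_bot] at hfm

-- Dividing `f` by its lowest Taylor factor `f j ^ m.choose j` does not change its value at `q` and
-- makes it vanish up to `j`; after `N` such divisions nothing is left.
lemma apply_eq_one_of_pow_choose_eq_one (hΓ : IsCommutatorFiltration Γ) {N q : ℕ}
    (hN : Γ (N + 1) = ⊥) (hq : ∀ j, 0 < j → j ≤ N → ∀ h ∈ Γ j, h ^ q.choose j = 1)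
    (hf : ∀ n, IsPolyUpTo Γ n 0 f) (hf0 : f 0 = 1) : f q = 1 := by
  suffices ∀ f, (∀ n, IsPolyUpTo Γ n 0 f) → (∀ i < 1, f i = 1) → f q = 1 from
    this f hf fun i hi => by rwa [Nat.lt_one_iff.1 hi]
  refine Nat.decreasingInduction'
    (P := fun j => ∀ f, (∀ n, IsPolyUpTo Γ n 0 f) → (∀ i < j, f i = 1) → f q = 1)
    (fun j hjN hj ih f hf hf1 => ?_) (Nat.le_add_left 1 N)
    fun f hf hf1 => apply_eq_one_of_forall_lt hΓ.antitone hN hf hf1 q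
  have hfj : f j ∈ Γ (0 + j) := (hf j).apply_mem_of_forall_lt hf1
  have hquot := ih (f * fun m => (f j)⁻¹ ^ m.choose j)
    (fun n => (hf n).mul hΓ (pow_choose hΓ.antitone (inv_mem hfj))) fun i hi => by
      rcases Nat.lt_succ_iff_lt_or_eq.1 hi with hi | rfl
      · simp [hf1 i hi, Nat.choose_eq_zero_of_lt hi]
      · simp
  have hfactor : f j ^ q.choose j = 1 :=
    hq j hj (Nat.le_of_lt_succ hjN) _ (by rwa [Nat.zero_add] at hfj)
  simpa [hfactor] using hquot

end IsPolyUpTo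

section DescendingProd

variable {G : Type*} [Group G]

/-- The ordered product `(x * k ^ (n - 1)) * ⋯ * (x * k) * x` from the definition of a witness,
with the number `n` of factors decoupled from the order of `k`. -/
def descendingProd (x k : G) (n : ℕ) : G :=
  ((List.range n).map (fun i => x * k ^ (n - 1 - i))).prod

lemma descendingProd_succ (x k : G) (n : ℕ) :
    descendingProd x k (n + 1) = x * k ^ n * descendingProd x k n := by
  simp only [descendingProd, List.range_succ_eq_map, List.map_cons, List.prod_cons, List.map_map]
  congr 3
  funext i
  simp [Nat.sub_sub, Nat.add_comm]

lemma seqDiff_descendingProd (x k : G) : seqDiff (descendingProd x k) = fun m => x * k ^ m :=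
  funext fun m => by rw [seqDiff, descendingProd_succ, mul_inv_cancel_right]

lemma seqDiff_mul_pow (x k : G) : seqDiff (fun m => x * k ^ m) = fun _ => x * k * x⁻¹ := by
  funext m
  rw [seqDiff]
  group

lemma isPolyUpTo_descendingProd {Γ : ℕ → Subgroup G} (hΓ : Antitone Γ) (h2 : Γ 2 = ⊤) (x k : G)
    (n : ℕ) : IsPolyUpTo Γ n 0 (descendingProd x k) := by
  have hmem {i : ℕ} (hi : i ≤ 2) (y : G) : y ∈ Γ i := hΓ hi (h2 ▸ Subgroup.mem_top y)
  suffices IsPolyUpTo Γ (n + 1 + 1) 0 (descendingProd x k) from this.of_succ.of_succ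
  rw [IsPolyUpTo.succ_iff, IsPolyUpTo.succ_iff, seqDiff_descendingProd, seqDiff_mul_pow]
  refine ⟨fun _ => hmem (by lia) _, fun _ => hmem (by lia) _, ?_⟩
  simpa only [Nat.choose_zero_right, pow_one] using
    IsPolyUpTo.pow_choose (j := 0) hΓ (hmem le_rfl (x * k * x⁻¹))

lemma descendingProd_eq_one [Group.IsNilpotent G] {q : ℕ}
    (hq : ∀ j, 0 < j → j ≤ 2 * Group.nilpotencyClass G → ∀ h : G, h ^ q.choose j = 1)
    (x k : G) : descendingProd x k q = 1 := by
  have hΓ := (IsCommutatorFiltration.lowerCentralSeries_pred (⊤ : Subgroup G)).comp_half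
  refine IsPolyUpTo.apply_eq_one_of_pow_choose_eq_one hΓ ?_ (fun j hj hjc h _ => hq j hj hjc h)
    (isPolyUpTo_descendingProd hΓ.antitone rfl x k) rfl
  exact Subgroup.lowerCentralSeries_eq_bot_iff_nilpotencyClass_le.2 (by lia)

end DescendingProd

lemma dvd_choose_of_coprime {n j : ℕ} (h : n.Coprime j) : n ∣ n.choose j := by
  cases n with
  | zero => simp [(Nat.coprime_zero_left j).1 h]
  | succ n =>
    cases j with
    | zero => simp [(Nat.coprime_zero_right _).1 h]
    | succ j => exact h.dvd_of_dvd_mul_right (Dvd.intro _ (Nat.add_one_mul_choose_eq n j))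

section ExponentOrder

variable {G : Type*} [Group G]

lemma orderOf_commutatorElement_dvd_right {x y : G} (hxy : ⁅x, y⁆ ∈ Subgroup.center G) :
    orderOf ⁅x, y⁆ ∣ orderOf y := by
  have hconj : ⁅x, y⁆ * y = x * y * x⁻¹ := inv_mul_cancel_right _ _
  have hcomm : Commute ⁅x, y⁆ y := (Subgroup.mem_center_iff.1 hxy y).symm
  apply orderOf_dvd_of_pow_eq_one
  simpa [conj_pow, hcomm.mul_pow, pow_orderOf_eq_one] using congr_arg (· ^ orderOf y) hconj

lemma commute_of_coprime_orderOf [Group.IsNilpotent G] {x y : G}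
    (hxy : (orderOf x).Coprime (orderOf y)) : Commute x y := by
  revert x y
  refine Group.nilpotent_center_quotient_ind
    (P := fun G _ _ => ∀ {x y : G}, (orderOf x).Coprime (orderOf y) → Commute x y) G
    (fun G _ _ x y _ => Subsingleton.elim _ _) fun G _ _ ih x y hxy => ?_
  let π := QuotientGroup.mk' (Subgroup.center G)
  have hπ : Commute (π x) (π y) :=
    ih ((hxy.coprime_dvd_left (orderOf_map_dvd π x)).coprime_dvd_right (orderOf_map_dvd π y))
  have hcenter : ⁅x, y⁆ ∈ Subgroup.center G := by
    rwa [← QuotientGroup.ker_mk' (Subgroup.center G), MonoidHom.mem_ker, map_commutatorElement,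
      commutatorElement_eq_one_iff_commute]
  have hdvd : orderOf ⁅x, y⁆ ∣ orderOf x := by
    rw [← orderOf_inv, commutatorElement_inv]
    exact orderOf_commutatorElement_dvd_right (commutatorElement_inv x y ▸ inv_mem hcenter)
  rw [← commutatorElement_eq_one_iff_commute, ← orderOf_eq_one_iff]
  exact Nat.eq_one_of_dvd_coprimes hxy hdvd (orderOf_commutatorElement_dvd_right hcenter)

lemma exists_orderOf_eq_exponent [Group.IsNilpotent G] (hG : Monoid.ExponentExists G) :
    ∃ g : G, orderOf g = Monoid.exponent G := by
  have hprod (s : Finset ℕ) (hs : ∀ p ∈ s, p.Prime) :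
      ∃ g : G, orderOf g = ∏ p ∈ s, p ^ (Monoid.exponent G).factorization p := by
    induction s using Finset.induction_on with
    | empty => exact ⟨1, orderOf_one⟩
    | insert p s hps ih =>
      obtain ⟨hp, hs⟩ := Finset.forall_mem_insert _ _ _ |>.1 hs
      obtain ⟨g, hg⟩ := ih hs
      obtain ⟨h, hh⟩ := hp.exists_orderOf_eq_pow_factorization_exponent G
      have hcoprime : (orderOf h).Coprime (orderOf g) := by
        rw [hg, hh]
        refine Nat.Coprime.prod_right fun q hq => Nat.Coprime.pow _ _ ?_
        exact (Nat.coprime_primes hp (hs q hq)).2 fun hpq => hps (hpq ▸ hq)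
      refine ⟨h * g, ?_⟩
      rw [(commute_of_coprime_orderOf hcoprime).orderOf_mul_eq_mul_orderOf_of_coprime hcoprime,
        Finset.prod_insert hps, hg, hh]
  obtain ⟨g, hg⟩ := hprod _ fun p => Nat.prime_of_mem_primeFactors
  exact ⟨g, hg.trans (Nat.prod_factorization_pow_eq_self hG.exponent_ne_zero)⟩

lemma eq_of_prime_dvd_exponent [Finite G] {p q : ℕ} (hp : p.Prime) (hG : IsPGroup p G)
    (hq : q.Prime) (hqG : q ∣ Monoid.exponent G) : q = p := by
  have := Fact.mk hp
  obtain ⟨e, he⟩ := hG.exists_exponent_eq_pow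
  exact (Nat.prime_dvd_prime_iff_eq hq hp).1 (hq.dvd_of_dvd_pow (he ▸ hqG))

end ExponentOrder

theorem pGroup_big_witness_of_large_p_general {G : Type*} [Group G] [Group.IsNilpotent G]
    (hG : ∀ q : ℕ, q.Prime → q ∣ Monoid.exponent G → 2 * Group.nilpotencyClass G < q) :
    (∀ k : G, orderOf k = Monoid.exponent G → IsWitness k) ∧ ∃ k : G, IsWitness k := by
  have hexp : Monoid.ExponentExists G := by
    rw [← Monoid.exponent_ne_zero]
    intro h0
    have hclass := hG 2 Nat.prime_two (h0 ▸ dvd_zero 2)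
    have := Group.nilpotencyClass_zero_iff_subsingleton.1 (by lia : Group.nilpotencyClass G = 0)
    exact one_ne_zero (Monoid.exp_eq_one_iff.2 this ▸ h0)
  have hpow (j : ℕ) (hj : 0 < j) (hjc : j ≤ 2 * Group.nilpotencyClass G) (h : G) :
      h ^ (Monoid.exponent G).choose j = 1 := by
    have hcoprime : (Monoid.exponent G).Coprime j := Nat.coprime_of_dvd fun q hq hqG hqj =>
      ((Nat.le_of_dvd hj hqj).trans hjc).not_gt (hG q hq hqG)
    exact Monoid.exponent_dvd_iff_forall_pow_eq_one.1 (dvd_choose_of_coprime hcoprime) h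
  have hwitness (k : G) (hk : orderOf k = Monoid.exponent G) : IsWitness k :=
    ⟨hexp.isOfFinOrder, fun x => descendingProd_eq_one (hk ▸ hpow) x k⟩
  obtain ⟨k, hk⟩ := exists_orderOf_eq_exponent hexp
  exact ⟨hwitness, k, hwitness k hk⟩

/-- If `G` is a finite `p`-group (`p` odd) of nilpotency class `c` with `p > 2c - 1`,
then every element of order equal to the exponent of `G` is a witness
(`B(G) ⊆ W(G)`), and `G` is a `J`-group. -/
theorem pGroup_big_witness_of_large_p {G : Type*} [Group G] [Fintype G]
    [Group.IsNilpotent G] (p : ℕ) (hp : p.Prime) (hodd : Odd p)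
    (hG : IsPGroup p G) (c : ℕ) (hc : Group.nilpotencyClass G = c)
    (hpc : 2 * c - 1 < p) :
    (∀ k : G, orderOf k = Monoid.exponent G → IsWitness k) ∧
      ∃ k : G, IsWitness k :=
  pGroup_big_witness_of_large_p_general fun q hq hqG => by
    obtain rfl := eq_of_prime_dvd_exponent hp hG hq hqG
    obtain ⟨r, hr⟩ := hodd
    lia
end

section
/- Let s be a positive odd integer and let α be an integer with α^s ≡ 1 (mod s). Then the sum ∑_{ℓ=0}^{s−1} α^ℓ is congruent to 0 modulo s, and the sum ∑_{ℓ=0}^{s−1} ℓ·α^ℓ is congruent to 0 modulo s. -/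
/-!
Write `S = ∑_{ℓ<n} a^ℓ` and `U = ∑_{m<n} ∑_{ℓ<m} a^ℓ`; summation by parts gives
`∑_{ℓ<n} ℓ a^ℓ = (n - 1) S - U`. Modulo a prime power `p^k ∣ n` one has `S ≡ 0` and `U ≡ C(n, 2)`:
if `p ∤ a - 1`, then `a - 1` may be cancelled from `(a - 1) S = a^n - 1` and `(a - 1) U = S - n`,
and `p` is odd, so that `C(n, 2) ≡ 0`; if `p` divides `y = a - 1`, then `S = ∑_j C(n, j+1) y^j` and
`U = ∑_j C(n, j+2) y^j`, and since `p^k ∣ i C(n, i)` every term is divisible by `p^k`, except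
possibly the term `C(n, 2)` of `U`. Hence `∑_{ℓ<n} ℓ a^ℓ ≡ -C(n, 2) ≡ C(n, 2)` modulo every divisor
of `n`, and this vanishes for odd moduli.
-/

open Finset

section Identities

variable {R : Type*} [CommRing R]

lemma geom_sum_eq_sum_choose_mul_sub_one_pow (a : R) (n : ℕ) :
    ∑ ℓ ∈ range n, a ^ ℓ = ∑ j ∈ range n, (n.choose (j + 1) : R) * (a - 1) ^ j := by
  simpa [Polynomial.eval_finsetSum] using
    congrArg (Polynomial.eval (a - 1)) (Polynomial.geom_sum_X_comp_X_add_one_eq_sum (R := R) n)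

lemma sum_geom_sum_eq_sum_choose_mul_sub_one_pow (a : R) (n : ℕ) :
    ∑ m ∈ range n, ∑ ℓ ∈ range m, a ^ ℓ =
      ∑ j ∈ range n, (n.choose (j + 2) : R) * (a - 1) ^ j := by
  induction n with
  | zero => simp
  | succ n ih =>
    have hlast : (n.choose (n + 2) : R) = 0 ∧ (n.choose (n + 1) : R) = 0 := by
      simp [Nat.choose_eq_zero_of_lt]
    simp only [sum_range_succ _ n, ih, geom_sum_eq_sum_choose_mul_sub_one_pow a n,
      Nat.choose_succ_succ' n, Nat.cast_add, add_mul, sum_add_distrib, hlast.1, hlast.2]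
    ring

lemma sub_one_mul_sum_geom_sum (a : R) (n : ℕ) :
    (a - 1) * ∑ m ∈ range n, ∑ ℓ ∈ range m, a ^ ℓ = (∑ ℓ ∈ range n, a ^ ℓ) - n := by
  rw [mul_sum]
  simp [mul_geom_sum]

lemma sum_natCast_mul_pow_eq_sub_sum_geom_sum (a : R) (n : ℕ) :
    ∑ ℓ ∈ range n, (ℓ : R) * a ^ ℓ =
      (n - 1) * ∑ ℓ ∈ range n, a ^ ℓ - ∑ m ∈ range n, ∑ ℓ ∈ range m, a ^ ℓ := by
  induction n with
  | zero => simp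
  | succ n ih =>
    simp only [sum_range_succ _ n, ih]
    push_cast
    ring

end Identities

lemma dvd_choose_mul_self {d n : ℕ} (hdn : d ∣ n) (i : ℕ) : d ∣ n.choose i * i := by
  rcases i with _ | i
  · simp
  rcases n with _ | n
  · simp
  rw [← Nat.add_one_mul_choose_eq]
  exact hdn.mul_right _

lemma dvd_choose_two_of_odd {d n : ℕ} (hd : Odd d) (hdn : d ∣ n) : d ∣ n.choose 2 :=
  (Nat.coprime_two_right.2 hd).dvd_of_dvd_mul_right (dvd_choose_mul_self hdn 2)

lemma prime_pow_dvd_choose_mul_pow {p k n i j : ℕ} (hp : p.Prime) (hn : p ^ k ∣ n) (hi : i ≠ 0)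
    (hij : i < p ^ (j + 1)) : p ^ k ∣ n.choose i * p ^ j := by
  obtain ⟨v, u, hpu, rfl⟩ := Nat.exists_eq_pow_mul_and_not_dvd hi p hp.ne_one
  have hvj : v ≤ j := by
    have hle : p ^ v ≤ p ^ v * u := Nat.le_of_dvd (Nat.pos_of_ne_zero hi) (dvd_mul_right _ _)
    exact Nat.lt_succ_iff.1 ((Nat.pow_lt_pow_iff_right hp.one_lt).1 (hle.trans_lt hij))
  have hdvd : p ^ k ∣ n.choose (p ^ v * u) * p ^ v * u :=
    (dvd_choose_mul_self hn _).trans (mul_assoc _ _ _).symm.dvd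
  have hcop : (p ^ k).Coprime u := (hp.coprime_iff_not_dvd.2 hpu).pow_left k
  exact (hcop.dvd_of_dvd_mul_right hdvd).trans (mul_dvd_mul_left _ (pow_dvd_pow p hvj))

section DvdSubOne

variable {R : Type*} [CommRing R] {p k n : ℕ} {a : R}

lemma prime_pow_dvd_choose_mul_pow_of_dvd {i j : ℕ} {y : R} (hp : p.Prime) (hn : p ^ k ∣ n)
    (hy : (p : R) ∣ y) (hi : i ≠ 0) (hij : i < p ^ (j + 1)) :
    ((p ^ k : ℕ) : R) ∣ n.choose i * y ^ j := by
  refine (Nat.cast_dvd_cast (prime_pow_dvd_choose_mul_pow hp hn hi hij)).trans ?_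
  push_cast
  exact mul_dvd_mul_left _ (pow_dvd_pow_of_dvd hy j)

lemma prime_pow_dvd_geom_sum (hp : p.Prime) (hn : p ^ k ∣ n) (ha : (p : R) ∣ a - 1) :
    ((p ^ k : ℕ) : R) ∣ ∑ ℓ ∈ range n, a ^ ℓ := by
  rw [geom_sum_eq_sum_choose_mul_sub_one_pow]
  exact dvd_sum fun j _ =>
    prime_pow_dvd_choose_mul_pow_of_dvd hp hn ha j.succ_ne_zero (Nat.lt_pow_self hp.one_lt)

lemma prime_pow_dvd_sum_geom_sum_sub_choose_two (hp : p.Prime) (hn : p ^ k ∣ n)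
    (ha : (p : R) ∣ a - 1) :
    ((p ^ k : ℕ) : R) ∣ (∑ m ∈ range n, ∑ ℓ ∈ range m, a ^ ℓ) - n.choose 2 := by
  rw [sum_geom_sum_eq_sum_choose_mul_sub_one_pow]
  rcases n with _ | n
  · simp
  rw [sum_range_succ', zero_add, pow_zero, mul_one, add_sub_cancel_right]
  refine dvd_sum fun j _ => prime_pow_dvd_choose_mul_pow_of_dvd hp hn ha (by lia) ?_
  calc
    j + 1 + 2 < 2 ^ (j + 1 + 1) := by
      have := Nat.lt_two_pow_self (n := j + 1)
      lia
    _ ≤ p ^ (j + 1 + 1) := Nat.pow_le_pow_left hp.two_le _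

end DvdSubOne

section Coprime

variable {R : Type*} [CommRing R] {d a : R} {n : ℕ}

lemma dvd_geom_sum_of_isCoprime (hd : IsCoprime d (a - 1)) (ha : d ∣ a ^ n - 1) :
    d ∣ ∑ ℓ ∈ range n, a ^ ℓ :=
  hd.dvd_of_dvd_mul_left (by rwa [mul_geom_sum])

lemma dvd_sum_geom_sum_of_isCoprime (hd : IsCoprime d (a - 1)) (hn : d ∣ n)
    (ha : d ∣ a ^ n - 1) : d ∣ ∑ m ∈ range n, ∑ ℓ ∈ range m, a ^ ℓ := by
  refine hd.dvd_of_dvd_mul_left ?_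
  rw [sub_one_mul_sum_geom_sum]
  exact dvd_sub (dvd_geom_sum_of_isCoprime hd ha) hn

end Coprime

section Int

variable {d n : ℕ} {a : ℤ}

lemma natCast_dvd_of_forall_prime_pow_dvd {x : ℤ}
    (h : ∀ p k : ℕ, p.Prime → p ^ k ∣ d → ((p ^ k : ℕ) : ℤ) ∣ x) : (d : ℤ) ∣ x := by
  rw [Int.natCast_dvd, Nat.dvd_iff_prime_pow_dvd_dvd]
  exact fun p k hp hk => Int.natCast_dvd.1 (h p k hp hk)

lemma isCoprime_natCast_prime_pow_of_not_dvd {p : ℕ} {x : ℤ} (hp : p.Prime) (k : ℕ)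
    (hx : ¬(p : ℤ) ∣ x) : IsCoprime ((p ^ k : ℕ) : ℤ) x := by
  rw [Nat.cast_pow]
  exact ((Nat.prime_iff_prime_int.1 hp).coprime_iff_not_dvd.2 hx).pow_left

lemma odd_of_dvd_pow_sub_one_of_not_dvd_sub_one {p : ℕ} (hp : p.Prime) (hn : n ≠ 0)
    (hpow : (p : ℤ) ∣ a ^ n - 1) (ha : ¬(p : ℤ) ∣ a - 1) : Odd p := by
  refine hp.odd_of_ne_two ?_
  rintro rfl
  simp only [Nat.cast_ofNat, ← even_iff_two_dvd, Int.even_sub_one, Int.even_pow] at hpow ha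
  tauto

lemma natCast_dvd_geom_sum (hdn : d ∣ n) (ha : (d : ℤ) ∣ a ^ n - 1) :
    (d : ℤ) ∣ ∑ ℓ ∈ range n, a ^ ℓ := by
  refine natCast_dvd_of_forall_prime_pow_dvd fun p k hp hk => ?_
  by_cases hpa : (p : ℤ) ∣ a - 1
  · exact prime_pow_dvd_geom_sum hp (hk.trans hdn) hpa
  · exact dvd_geom_sum_of_isCoprime (isCoprime_natCast_prime_pow_of_not_dvd hp k hpa)
      ((Int.natCast_dvd_natCast.2 hk).trans ha)

lemma natCast_dvd_sum_geom_sum_sub_choose_two (hdn : d ∣ n) (ha : (d : ℤ) ∣ a ^ n - 1) :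
    (d : ℤ) ∣ (∑ m ∈ range n, ∑ ℓ ∈ range m, a ^ ℓ) - n.choose 2 := by
  rcases eq_or_ne n 0 with rfl | hn
  · simp
  refine natCast_dvd_of_forall_prime_pow_dvd fun p k hp hk => ?_
  by_cases hpa : (p : ℤ) ∣ a - 1
  · exact prime_pow_dvd_sum_geom_sum_sub_choose_two hp (hk.trans hdn) hpa
  rcases eq_or_ne k 0 with rfl | hk0
  · simp
  have hpk : ((p ^ k : ℕ) : ℤ) ∣ a ^ n - 1 := (Int.natCast_dvd_natCast.2 hk).trans ha
  have hpodd : Odd p := odd_of_dvd_pow_sub_one_of_not_dvd_sub_one hp hn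
    ((Int.natCast_dvd_natCast.2 (dvd_pow_self p hk0)).trans hpk) hpa
  have hpn : p ^ k ∣ n := hk.trans hdn
  exact dvd_sub
    (dvd_sum_geom_sum_of_isCoprime (isCoprime_natCast_prime_pow_of_not_dvd hp k hpa)
      (Int.natCast_dvd_natCast.2 hpn) hpk)
    (Int.natCast_dvd_natCast.2 (dvd_choose_two_of_odd hpodd.pow hpn))

theorem sum_pow_modEq_zero_general (hdn : d ∣ n) (ha : a ^ n ≡ 1 [ZMOD d]) :
    (∑ ℓ ∈ range n, a ^ ℓ) ≡ 0 [ZMOD d] ∧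
      (∑ ℓ ∈ range n, (ℓ : ℤ) * a ^ ℓ) ≡ n.choose 2 [ZMOD d] := by
  have hS := natCast_dvd_geom_sum hdn ha.symm.dvd
  have hU := natCast_dvd_sum_geom_sum_sub_choose_two hdn ha.symm.dvd
  refine ⟨Int.modEq_zero_iff_dvd.2 hS, (Int.modEq_iff_dvd.2 ?_).symm⟩
  have hchoose : (d : ℤ) ∣ n.choose 2 * 2 := by exact_mod_cast dvd_choose_mul_self hdn 2
  have hsub : (∑ ℓ ∈ range n, (ℓ : ℤ) * a ^ ℓ) - n.choose 2 =
      (n - 1) * ∑ ℓ ∈ range n, a ^ ℓ -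
        ((∑ m ∈ range n, ∑ ℓ ∈ range m, a ^ ℓ) - n.choose 2) - n.choose 2 * 2 := by
    rw [sum_natCast_mul_pow_eq_sub_sum_geom_sum]
    ring
  rw [hsub]
  exact dvd_sub (dvd_sub (hS.mul_left _) hU) hchoose

end Int

/-- If `s` is a positive odd integer and `α^s ≡ 1 (mod s)`, then
`∑_{ℓ=0}^{s-1} α^ℓ ≡ 0 (mod s)` and `∑_{ℓ=0}^{s-1} ℓ·α^ℓ ≡ 0 (mod s)`. -/
theorem sum_pow_modEq_zero (s : ℕ) (hs : 0 < s) (hodd : Odd s) (α : ℤ)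
    (hα : α ^ s ≡ 1 [ZMOD (s : ℤ)]) :
    (∑ ℓ ∈ Finset.range s, α ^ ℓ) ≡ 0 [ZMOD (s : ℤ)] ∧
      (∑ ℓ ∈ Finset.range s, (ℓ : ℤ) * α ^ ℓ) ≡ 0 [ZMOD (s : ℤ)] :=
  (sum_pow_modEq_zero_general dvd_rfl hα).imp_right fun h => h.trans <|
    Int.modEq_zero_iff_dvd.2 (Int.natCast_dvd_natCast.2 (dvd_choose_two_of_odd hodd dvd_rfl))
end
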